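/- arXiv:2411.11722 — 3 statements merged into one kernel-verified Lean document; each statement's English description precedes it below -/
import Mathlib

section
/- The gadget system has a real solution in which at most 3n of the 5n variables are nonzero if and only if there exists a subset J of {1,...,n} with sum over j in J of a_j equal to a_0. -/
/-!
Write `s = s₂`. The equations of one gadget force `s₁ = t₁ = 1 - s`, `t₂ = s` and `x = 1 + a s`, so
`∑ j, x j = n + a₀` says `∑ j, a j * s j = a₀`. A gadget has exactly three nonzero variables when
`s ∈ {0, 1}` and at least four otherwise; hence the budget of `3n` nonzero variables forces every
`s j` into `{0, 1}`, and `s` is the indicator of the required subset.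
-/

theorem sum_le_card_nsmul_iff_forall_le {ι M : Type*} [AddCommMonoid M] [PartialOrder M]
    [IsOrderedCancelAddMonoid M] {t : Finset ι} {f : ι → M} {k : M} (hf : ∀ j ∈ t, k ≤ f j) :
    ∑ j ∈ t, f j ≤ t.card • k ↔ ∀ j ∈ t, f j ≤ k := by
  refine ⟨fun hle => ?_, Finset.sum_le_card_nsmul t f k⟩
  have hsum : ∑ _j ∈ t, k = ∑ j ∈ t, f j :=
    (Finset.sum_le_sum hf).antisymm (hle.trans_eq (Finset.sum_const k).symm)
  exact fun j hj => ((Finset.sum_eq_sum_iff_of_le hf).1 hsum j hj).ge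

theorem exists_zero_one_weighted_sum_eq_iff {ι R : Type*} [Fintype ι] [NonAssocSemiring R]
    {b : ι → R} {c : R} :
    (∃ s : ι → R, (∀ j, s j = 0 ∨ s j = 1) ∧ ∑ j, b j * s j = c) ↔
      ∃ J : Finset ι, ∑ j ∈ J, b j = c := by
  classical
  constructor
  · rintro ⟨s, hs, rfl⟩
    refine ⟨Finset.univ.filter fun j => s j = 1, ?_⟩
    rw [Finset.sum_filter]
    refine Finset.sum_congr rfl fun j _ => ?_
    split_ifs with h1
    · rw [h1, mul_one]
    · rw [(hs j).resolve_right h1, mul_zero]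
  · rintro ⟨J, rfl⟩
    exact ⟨fun j => if j ∈ J then 1 else 0, fun j => (ite_eq_or_eq _ _ _).symm, by simp⟩

theorem gadget_equations_iff {R : Type*} [Ring R] {b s₁ s₂ t₁ t₂ x : R} (hb : IsLeftRegular b) :
    (s₁ + s₂ = 1 ∧ s₁ - (b - 1) * s₂ + x = 2 ∧ t₁ + t₂ = 1 ∧ t₁ - (b - 1) * t₂ + x = 2) ↔
      s₁ = 1 - s₂ ∧ t₁ = 1 - s₂ ∧ t₂ = s₂ ∧ x = 1 + b * s₂ := by
  have solve_x (u : R) : 1 - u - (b - 1) * u + x = 2 ↔ x = 1 + b * u := by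
    have h : 1 - u - (b - 1) * u + x - 2 = x - (1 + b * u) := by grind
    rw [← sub_eq_zero, h, sub_eq_zero]
  constructor
  · rintro ⟨hs, hsx, ht, htx⟩
    obtain rfl := eq_sub_of_add_eq hs
    obtain rfl := eq_sub_of_add_eq ht
    rw [solve_x] at hsx htx
    obtain rfl : t₂ = s₂ := hb (add_left_cancel (htx.symm.trans hsx))
    exact ⟨rfl, rfl, rfl, hsx⟩
  · rintro ⟨rfl, rfl, rfl, hx⟩
    exact ⟨sub_add_cancel _ _, (solve_x _).2 hx, sub_add_cancel _ _, (solve_x _).2 hx⟩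

section Count

variable {R : Type*} [Ring R] [DecidableEq R]

/-- The number of nonzero entries in the solution `(s₁, s₂, t₁, t₂, x)` of a single gadget with
coefficient `b` whose free parameter `s₂` is `s`. -/
def gadgetNonzeroCount (b s : R) : ℕ :=
  [1 - s, s, 1 - s, s, 1 + b * s].countP (· ≠ 0)

theorem gadgetNonzeroCount_le_three_iff {b s : R} :
    gadgetNonzeroCount b s ≤ 3 ↔ s = 0 ∨ s = 1 := by
  constructor
  · contrapose!
    rintro ⟨h0, h1⟩
    have h1' : 1 - s ≠ 0 := sub_ne_zero.2 h1.symm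
    simp [gadgetNonzeroCount, h0, h1']
  · rintro (rfl | rfl) <;> grind [gadgetNonzeroCount]

theorem three_le_gadgetNonzeroCount {b : R} (hb : b ≠ -1) (s : R) :
    3 ≤ gadgetNonzeroCount b s := by
  have : Nontrivial R := nontrivial_of_ne b (-1) hb
  have hb' : 1 + b ≠ 0 := fun h => hb (eq_neg_of_add_eq_zero_right h)
  by_cases hs : s = 0 ∨ s = 1
  · rcases hs with rfl | rfl <;> simp [gadgetNonzeroCount, hb']
  · exact (not_le.1 (mt gadgetNonzeroCount_le_three_iff.1 hs)).le

theorem sum_gadgetNonzeroCount {ι : Type*} [Fintype ι] (b s : ι → R) :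
    ∑ j, gadgetNonzeroCount (b j) (s j) =
      (Finset.univ.filter fun j => (1 - s) j ≠ 0).card +
      (Finset.univ.filter fun j => s j ≠ 0).card +
      (Finset.univ.filter fun j => (1 - s) j ≠ 0).card +
      (Finset.univ.filter fun j => s j ≠ 0).card +
      (Finset.univ.filter fun j => (1 + b * s) j ≠ 0).card := by
  simp only [gadgetNonzeroCount, List.countP_cons, List.countP_nil, Finset.card_filter,
    Finset.sum_add_distrib, decide_eq_true_eq, Finset.sum_const_zero, Pi.sub_apply, Pi.add_apply,
    Pi.mul_apply, Pi.one_apply]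
  ring

theorem sum_gadgetNonzeroCount_le_iff {ι : Type*} [Fintype ι] {b : ι → R} (hb : ∀ j, b j ≠ -1)
    {s : ι → R} :
    ∑ j, gadgetNonzeroCount (b j) (s j) ≤ 3 * Fintype.card ι ↔ ∀ j, s j = 0 ∨ s j = 1 := by
  rw [mul_comm, ← smul_eq_mul, ← Finset.card_univ,
    sum_le_card_nsmul_iff_forall_le fun j _ => three_le_gadgetNonzeroCount (hb j) (s j)]
  simp only [Finset.mem_univ, true_implies, gadgetNonzeroCount_le_three_iff]

end Count

theorem gadget_system_solvable_iff_subset_sum_general {ι R : Type*} [Fintype ι] [Ring R]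
    [DecidableEq R] (c : R) (b : ι → R) (hb : ∀ j, IsLeftRegular (b j)) (hb_ne : ∀ j, b j ≠ -1) :
    (∃ s1 s2 t1 t2 x : ι → R,
      (∀ j, s1 j + s2 j = 1) ∧
      (∀ j, s1 j - (b j - 1) * s2 j + x j = 2) ∧
      (∀ j, t1 j + t2 j = 1) ∧
      (∀ j, t1 j - (b j - 1) * t2 j + x j = 2) ∧
      (∑ j, x j = Fintype.card ι + c) ∧
      ((Finset.univ.filter (fun j => s1 j ≠ 0)).card +
       (Finset.univ.filter (fun j => s2 j ≠ 0)).card +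
       (Finset.univ.filter (fun j => t1 j ≠ 0)).card +
       (Finset.univ.filter (fun j => t2 j ≠ 0)).card +
       (Finset.univ.filter (fun j => x j ≠ 0)).card ≤ 3 * Fintype.card ι)) ↔
    ∃ J : Finset ι, ∑ j ∈ J, b j = c := by
  have sum_x_iff (s : ι → R) :
      ∑ j, (1 + b j * s j) = Fintype.card ι + c ↔ ∑ j, b j * s j = c := by
    simp [Finset.sum_add_distrib]
  -- Together the gadgets form a single gadget over the product ring `ι → R`.
  have b_regular : IsLeftRegular b := Pi.isLeftRegular_iff.2 hb
  rw [← exists_zero_one_weighted_sum_eq_iff]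
  constructor
  · rintro ⟨s1, s2, t1, s, x, hs, hsx, ht, htx, hx, hcard⟩
    obtain ⟨rfl, rfl, rfl, rfl⟩ :=
      (gadget_equations_iff b_regular).1 ⟨funext hs, funext hsx, funext ht, funext htx⟩
    rw [← sum_gadgetNonzeroCount] at hcard
    exact ⟨s, (sum_gadgetNonzeroCount_le_iff hb_ne).1 hcard, (sum_x_iff s).1 hx⟩
  · rintro ⟨s, hs, hsum⟩
    obtain ⟨hs1, hsx, ht1, htx⟩ := (gadget_equations_iff b_regular).2 ⟨rfl, rfl, rfl, rfl⟩
    refine ⟨1 - s, s, 1 - s, s, 1 + b * s, congrFun hs1, congrFun hsx, congrFun ht1, congrFun htx,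
      (sum_x_iff s).2 hsum, ?_⟩
    rw [← sum_gadgetNonzeroCount]
    exact (sum_gadgetNonzeroCount_le_iff hb_ne).2 hs

/-- The gadget system (on `5n` real variables `s₁ⱼ, s₂ⱼ, t₁ⱼ, t₂ⱼ, xⱼ`)
has a real solution in which at most `3n` of the `5n` variables are nonzero
if and only if there exists a subset `J` of `{1,…,n}` with `∑_{j∈J} aⱼ = a₀`. -/
theorem gadget_system_solvable_iff_subset_sum
    (n : ℕ) (hn : 1 ≤ n) (a0 : ℤ) (ha0 : 0 < a0) (a : Fin n → ℤ) (ha : ∀ j, 1 < a j) :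
    (∃ s1 s2 t1 t2 x : Fin n → ℝ,
      (∀ j, s1 j + s2 j = 1) ∧
      (∀ j, s1 j - ((a j : ℝ) - 1) * s2 j + x j = 2) ∧
      (∀ j, t1 j + t2 j = 1) ∧
      (∀ j, t1 j - ((a j : ℝ) - 1) * t2 j + x j = 2) ∧
      (∑ j, x j = (n : ℝ) + (a0 : ℝ)) ∧
      ((Finset.univ.filter (fun j => s1 j ≠ 0)).card +
       (Finset.univ.filter (fun j => s2 j ≠ 0)).card +
       (Finset.univ.filter (fun j => t1 j ≠ 0)).card +
       (Finset.univ.filter (fun j => t2 j ≠ 0)).card +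
       (Finset.univ.filter (fun j => x j ≠ 0)).card ≤ 3 * n)) ↔
    (∃ J : Finset (Fin n), ∑ j ∈ J, a j = a0) := by
  have hpos j : (0 : ℝ) < a j := by exact_mod_cast zero_lt_one.trans (ha j)
  simpa [← Int.cast_sum] using gadget_system_solvable_iff_subset_sum_general (a0 : ℝ)
    (fun j => (a j : ℝ)) (fun j => (IsRegular.of_ne_zero (hpos j).ne').left)
    (fun j => by linarith [hpos j])
end

section
/- Suppose (s,t,x) is a real solution of the gadget system in which at most 3n of the 5n variables are nonzero. Then for every j with 1 <= j <= n, exactly one of s_{1j}, s_{2j} is nonzero and exactly one of t_{1j}, t_{2j} is nonzero; moreover either (s_{1j}, s_{2j}, x_j) = (1, 0, 1) or (s_{1j}, s_{2j}, x_j) = (0, 1, a_j + 1); and the index set J = { j : s_{2j} != 0 } satisfies sum over j in J of a_j equal to a_0. -/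
/-!
Each pair `(u, v)` of a gadget satisfies `x = 1 + a * v`, so `x` determines the pair and the two
pairs of a gadget coincide. If both entries of the common pair are nonzero, the gadget has at least
four nonzero variables; otherwise `(u, v, x)` is `(1, 0, 1)` or `(0, 1, a + 1)` and it has exactly
three. A budget of three nonzero variables per gadget on average thus forces the latter everywhere.
Summing `x = 1 + a * v` over the gadgets turns the last equation into `∑ j, a j * v j = a0`, where
`v` is now the indicator function of its own support.
-/

theorem eq_of_le_of_sum_le {ι M : Type*} [Fintype ι] [AddCommMonoid M] [PartialOrder M]
    [IsOrderedCancelAddMonoid M] {f g : ι → M} (hle : f ≤ g) (hsum : ∑ j, g j ≤ ∑ j, f j) :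
    f = g :=
  eq_of_le_of_not_lt hle fun hlt => (Fintype.sum_strictMono hlt).not_ge hsum

theorem sum_hammingNorm_comm {ι κ R : Type*} [Fintype ι] [Fintype κ] [Zero R] [DecidableEq R]
    (w : κ → ι → R) : ∑ k, hammingNorm (w k) = ∑ j, hammingNorm fun k => w k j := by
  simp only [hammingNorm, Finset.card_filter]
  exact Finset.sum_comm

theorem four_le_hammingNorm_of_ne_zero {R : Type*} [Zero R] [DecidableEq R] {u v : R}
    (hu : u ≠ 0) (hv : v ≠ 0) (x : R) : 4 ≤ hammingNorm ![u, v, u, v, x] := by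
  simp [hammingNorm, Finset.card_filter, Fin.sum_univ_five, hu, hv]

/-- Half of a gadget with parameter `a`: the two equations that tie one pair of variables, either
`(s₁ⱼ, s₂ⱼ)` or `(t₁ⱼ, t₂ⱼ)`, to `xⱼ`. A full gadget is two such pairs sharing the same `x`. -/
structure IsGadgetPair {R : Type*} [Ring R] (a u v x : R) : Prop where
  add_eq_one : u + v = 1
  sub_add_eq_two : u - (a - 1) * v + x = 2

namespace IsGadgetPair

variable {R : Type*} [Ring R] {a u v u' v' x : R}

theorem eq_one_add_mul (h : IsGadgetPair a u v x) : x = 1 + a * v := calc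
  x = u - (a - 1) * v + x - (u + v) + a * v := by noncomm_ring
  _ = 1 + a * v := by rw [h.sub_add_eq_two, h.add_eq_one]; norm_num

theorem eq_and_eq [NoZeroDivisors R] (ha : a ≠ 0) (h : IsGadgetPair a u v x)
    (h' : IsGadgetPair a u' v' x) : u = u' ∧ v = v' := by
  have hv : v = v' :=
    mul_left_cancel₀ ha (add_left_cancel (h.eq_one_add_mul.symm.trans h'.eq_one_add_mul))
  subst hv
  exact ⟨add_right_cancel (h.add_eq_one.trans h'.add_eq_one.symm), rfl⟩

theorem eq_one_zero_or_eq_zero_one (h : IsGadgetPair a u v x) (huv : u = 0 ∨ v = 0) :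
    (u = 1 ∧ v = 0 ∧ x = 1) ∨ (u = 0 ∧ v = 1 ∧ x = a + 1) := by
  have hx := h.eq_one_add_mul
  rcases huv with rfl | rfl
  · obtain rfl : v = 1 := by simpa using h.add_eq_one
    exact .inr ⟨rfl, rfl, by rw [hx, mul_one, add_comm]⟩
  · exact .inl ⟨by simpa using h.add_eq_one, rfl, by simpa using hx⟩

theorem three_le_hammingNorm [DecidableEq R] (ha : a + 1 ≠ 0)
    (h : IsGadgetPair a u v x) : 3 ≤ hammingNorm ![u, v, u, v, x] := by
  have : Nontrivial R := nontrivial_of_ne _ _ ha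
  by_cases huv : u = 0 ∨ v = 0
  · rcases h.eq_one_zero_or_eq_zero_one huv with ⟨rfl, rfl, rfl⟩ | ⟨rfl, rfl, rfl⟩ <;>
      simp [hammingNorm, Finset.card_filter, Fin.sum_univ_five, ha]
  · rw [not_or] at huv
    exact (Nat.le_succ 3).trans (four_le_hammingNorm_of_ne_zero huv.1 huv.2 x)

end IsGadgetPair

section System

variable {ι R : Type*} [Fintype ι] [Ring R] {a0 : R} {a s1 s2 t1 t2 x : ι → R}

theorem eq_zero_or_eq_zero_of_sum_hammingNorm_le [DecidableEq R]
    (ha : ∀ j, a j + 1 ≠ 0) (h : ∀ j, IsGadgetPair (a j) (s1 j) (s2 j) (x j))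
    (hcard : 2 * (hammingNorm s1 + hammingNorm s2) + hammingNorm x ≤ 3 * Fintype.card ι)
    (j : ι) : s1 j = 0 ∨ s2 j = 0 := by
  have hsum : ∑ j, hammingNorm ![s1 j, s2 j, s1 j, s2 j, x j] ≤ ∑ _j : ι, 3 := calc
    _ = ∑ k, hammingNorm (![s1, s2, s1, s2, x] k) := by
      rw [sum_hammingNorm_comm ![s1, s2, s1, s2, x]]
      congr! with j _ k
      fin_cases k <;> rfl
    _ = 2 * (hammingNorm s1 + hammingNorm s2) + hammingNorm x := by
      simp only [Fin.sum_univ_five, Matrix.cons_val]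
      ring
    _ ≤ ∑ _j : ι, 3 := by simpa [mul_comm] using hcard
  have hthree : 3 = hammingNorm ![s1 j, s2 j, s1 j, s2 j, x j] :=
    congrFun (eq_of_le_of_sum_le (fun j => (h j).three_le_hammingNorm (ha j)) hsum) j
  by_contra! hne
  have hfour := four_le_hammingNorm_of_ne_zero hne.1 hne.2 (x j)
  omega

theorem sum_mul_eq_of_sum_eq_card_add (h : ∀ j, IsGadgetPair (a j) (s1 j) (s2 j) (x j))
    (hsum : ∑ j, x j = Fintype.card ι + a0) : ∑ j, a j * s2 j = a0 := by
  simpa [fun j => (h j).eq_one_add_mul, Finset.sum_add_distrib] using hsum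

theorem gadget_solution_structure_general [IsDomain R] [DecidableEq R]
    (ha : ∀ j, a j ≠ 0) (ha1 : ∀ j, a j + 1 ≠ 0)
    (hs : ∀ j, IsGadgetPair (a j) (s1 j) (s2 j) (x j))
    (ht : ∀ j, IsGadgetPair (a j) (t1 j) (t2 j) (x j))
    (hsum : ∑ j, x j = Fintype.card ι + a0)
    (hcard : hammingNorm s1 + hammingNorm s2 + hammingNorm t1 + hammingNorm t2 + hammingNorm x ≤
      3 * Fintype.card ι) :
    (∀ j, ((s1 j ≠ 0 ∧ s2 j = 0) ∨ (s1 j = 0 ∧ s2 j ≠ 0)) ∧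
          ((t1 j ≠ 0 ∧ t2 j = 0) ∨ (t1 j = 0 ∧ t2 j ≠ 0)) ∧
          ((s1 j = 1 ∧ s2 j = 0 ∧ x j = 1) ∨ (s1 j = 0 ∧ s2 j = 1 ∧ x j = a j + 1))) ∧
    ∑ j with s2 j ≠ 0, a j = a0 := by
  obtain rfl : t1 = s1 := funext fun j => ((ht j).eq_and_eq (ha j) (hs j)).1
  obtain rfl : t2 = s2 := funext fun j => ((ht j).eq_and_eq (ha j) (hs j)).2
  have hvertex (j) := (hs j).eq_one_zero_or_eq_zero_one
    (eq_zero_or_eq_zero_of_sum_hammingNorm_le ha1 hs (by omega) j)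
  refine ⟨fun j => ?_, ?_⟩
  · rcases hvertex j with ⟨h1, h2, hx⟩ | ⟨h1, h2, hx⟩ <;> simp [h1, h2, hx]
  · rw [← sum_mul_eq_of_sum_eq_card_add hs hsum, Finset.sum_filter]
    refine Finset.sum_congr rfl fun j _ => ?_
    rcases hvertex j with ⟨-, h2, -⟩ | ⟨-, h2, -⟩ <;> simp [h2]

end System

/-- If `(s,t,x)` is a real solution of the gadget system with at most `3n`
nonzero variables, then for each `j` exactly one of `s₁ⱼ, s₂ⱼ` is nonzero and exactly one
of `t₁ⱼ, t₂ⱼ` is nonzero; moreover either `(s₁ⱼ, s₂ⱼ, xⱼ) = (1,0,1)` or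
`(s₁ⱼ, s₂ⱼ, xⱼ) = (0,1,aⱼ+1)`; and `J = {j : s₂ⱼ ≠ 0}` satisfies `∑_{j∈J} aⱼ = a₀`. -/
theorem gadget_solution_structure
    (n : ℕ) (hn : 1 ≤ n) (a0 : ℤ) (ha0 : 0 < a0) (a : Fin n → ℤ) (ha : ∀ j, 1 < a j)
    (s1 s2 t1 t2 x : Fin n → ℝ)
    (hs : ∀ j, s1 j + s2 j = 1)
    (hsx : ∀ j, s1 j - ((a j : ℝ) - 1) * s2 j + x j = 2)
    (ht : ∀ j, t1 j + t2 j = 1)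
    (htx : ∀ j, t1 j - ((a j : ℝ) - 1) * t2 j + x j = 2)
    (hsum : ∑ j, x j = (n : ℝ) + (a0 : ℝ))
    (hcard : (Finset.univ.filter (fun j => s1 j ≠ 0)).card +
             (Finset.univ.filter (fun j => s2 j ≠ 0)).card +
             (Finset.univ.filter (fun j => t1 j ≠ 0)).card +
             (Finset.univ.filter (fun j => t2 j ≠ 0)).card +
             (Finset.univ.filter (fun j => x j ≠ 0)).card ≤ 3 * n) :
    (∀ j, ((s1 j ≠ 0 ∧ s2 j = 0) ∨ (s1 j = 0 ∧ s2 j ≠ 0)) ∧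
          ((t1 j ≠ 0 ∧ t2 j = 0) ∨ (t1 j = 0 ∧ t2 j ≠ 0)) ∧
          ((s1 j = 1 ∧ s2 j = 0 ∧ x j = 1) ∨
           (s1 j = 0 ∧ s2 j = 1 ∧ x j = (a j : ℝ) + 1))) ∧
    ∑ j ∈ Finset.univ.filter (fun j => s2 j ≠ 0), a j = a0 := by
  have ha_real (j) : (1 : ℝ) < a j := by exact_mod_cast ha j
  exact_mod_cast gadget_solution_structure_general (a := fun j => (a j : ℝ)) (a0 := (a0 : ℝ))
    (fun j => by linarith [ha_real j]) (fun j => by linarith [ha_real j])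
    (fun j => ⟨hs j, hsx j⟩) (fun j => ⟨ht j, htx j⟩) (by simpa using hsum)
    (by simpa [hammingNorm] using hcard)
end

section
/- There exists a vector x : {1,...,n} -> R satisfying sum_{j=1}^n x_j = N, sum_{j=1}^n a_j x_j = a_0, at most N of the entries x_j are nonzero, and sum_{j=1}^n x_j^2 <= N, if and only if there exists a subset J of {1,...,n} with |J| = N such that sum over j in J of a_j equals a_0. -/
/-!
Let `S` be the support of `x`. Expanding the square gives
`∑ (xⱼ - 1_S(j))² = ∑ xⱼ² - 2 ∑ xⱼ + |S|`, and the right-hand side is at most `N - 2N + N = 0`.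
Hence `x` is the indicator vector of `S`, and the linear constraints on `x` turn into `|S| = N` and
`∑_{j ∈ S} aⱼ = a₀`.
-/

section IndicatorVectors

open Finset Function

variable {ι R : Type*} [Fintype ι]

theorem sum_indicator_one_smul {M : Type*} [Semiring R] [AddCommMonoid M] [Module R M]
    (J : Finset ι) (a : ι → M) :
    ∑ j, (J : Set ι).indicator (1 : ι → R) j • a j = ∑ j ∈ J, a j := by
  classical
  simp [Set.indicator_apply]

theorem sum_sub_indicator_support_sq [CommRing R] [DecidableEq R] (x : ι → R) :
    ∑ j, (x j - (support x).indicator 1 j) ^ 2 =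
      ∑ j, x j ^ 2 - 2 * ∑ j, x j + (#{j | x j ≠ 0} : R) := by
  rw [← sum_boole, mul_sum, ← sum_sub_distrib, ← sum_add_distrib]
  refine sum_congr rfl fun j _ => ?_
  by_cases hj : x j = 0
  · simp [hj]
  · simp only [Set.indicator_of_mem (mem_support.mpr hj), Pi.one_apply, if_pos hj, ne_eq]
    ring

variable [CommRing R] [LinearOrder R] [IsStrictOrderedRing R]

theorem eq_indicator_support_of_sum_sq_le {x : ι → R} {c : R} (hsum : c ≤ ∑ j, x j)
    (hcard : (#{j | x j ≠ 0} : R) ≤ c) (hsq : ∑ j, x j ^ 2 ≤ c) :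
    x = (support x).indicator 1 := by
  have hdist : ∑ j, (x j - (support x).indicator 1 j) ^ 2 ≤ 0 := by
    rw [sum_sub_indicator_support_sq]
    linarith
  have hzero : ∑ j, (x j - (support x).indicator 1 j) ^ 2 = 0 :=
    hdist.antisymm (sum_nonneg fun _ _ => sq_nonneg _)
  rw [sum_eq_zero_iff_of_nonneg fun _ _ => sq_nonneg _] at hzero
  exact funext fun j => sub_eq_zero.mp (sq_eq_zero_iff.mp (hzero j (mem_univ j)))

theorem sum_eq_and_card_support_le_and_sum_sq_le_iff {x : ι → R} {N : ℕ} :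
    (∑ j, x j = N ∧ #{j | x j ≠ 0} ≤ N ∧ ∑ j, x j ^ 2 ≤ N) ↔
      ∃ J : Finset ι, #J = N ∧ x = (J : Set ι).indicator 1 := by
  classical
  constructor
  · rintro ⟨hsum, hcard, hsq⟩
    have hx : x = (support x).indicator 1 :=
      eq_indicator_support_of_sum_sq_le hsum.ge (mod_cast hcard) hsq
    obtain ⟨J, rfl⟩ : ∃ J : Finset ι, x = (J : Set ι).indicator 1 :=
      ⟨({j | x j ≠ 0} : Finset ι), by rwa [coe_filter_univ]⟩
    exact ⟨J, by simpa [Set.indicator_apply] using hsum, rfl⟩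
  · rintro ⟨J, rfl, rfl⟩
    simp [Set.indicator_apply]

theorem tworow_card_iff_subset_sum_general {M : Type*} [AddCommMonoid M] [Module R M]
    (N : ℕ) (a0 : M) (a : ι → M) :
    (∃ x : ι → R, ∑ j, x j = N ∧ ∑ j, x j • a j = a0 ∧ #{j | x j ≠ 0} ≤ N ∧
      ∑ j, x j ^ 2 ≤ N) ↔
    ∃ J : Finset ι, #J = N ∧ ∑ j ∈ J, a j = a0 := by
  constructor
  · rintro ⟨x, hsum, hdot, hcard, hsq⟩
    obtain ⟨J, hJ, rfl⟩ :=
      sum_eq_and_card_support_le_and_sum_sq_le_iff.mp ⟨hsum, hcard, hsq⟩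
    exact ⟨J, hJ, by rwa [sum_indicator_one_smul] at hdot⟩
  · rintro ⟨J, hJ, hdot⟩
    obtain ⟨hsum, hcard, hsq⟩ :=
      sum_eq_and_card_support_le_and_sum_sq_le_iff (R := R).mpr ⟨J, hJ, rfl⟩
    exact ⟨_, hsum, by rwa [sum_indicator_one_smul], hcard, hsq⟩

end IndicatorVectors

/-- There is `x : Fin n → ℝ` with `∑ xⱼ = N`, `∑ aⱼ xⱼ = a₀`, at most `N`
nonzero entries, and `∑ xⱼ² ≤ N`, if and only if there is `J ⊆ {1,…,n}` with `|J| = N`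
and `∑_{j∈J} aⱼ = a₀`. -/
theorem tworow_card_iff_subset_sum
    (n : ℕ) (hn : 1 ≤ n) (N : ℕ) (hN1 : 1 ≤ N) (hNn : N ≤ n)
    (a0 : ℤ) (ha0 : 0 < a0) (a : Fin n → ℤ) (ha : ∀ j, 0 < a j) :
    (∃ x : Fin n → ℝ,
      (∑ j, x j = (N : ℝ)) ∧
      (∑ j, (a j : ℝ) * x j = (a0 : ℝ)) ∧
      (Finset.univ.filter (fun j => x j ≠ 0)).card ≤ N ∧
      (∑ j, (x j) ^ 2 ≤ (N : ℝ))) ↔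
    (∃ J : Finset (Fin n), J.card = N ∧ ∑ j ∈ J, a j = a0) := by
  simpa only [smul_eq_mul, mul_comm, ← Int.cast_sum, Int.cast_inj] using
    tworow_card_iff_subset_sum_general (R := ℝ) N (a0 : ℝ) fun j => (a j : ℝ)
end
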